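/- For a unit-energy zonal window h (⟨h,h⟩ = 1) and band-limited f, the SLSHT distribution conserves a weighted energy: Σ_n ∫_{S²} |g_f(ŷ; n)|² ds(ŷ) = ∫_{S²} |f(x̂)|² · E_h(x̂) ds(x̂) where E_h(x̂) = ∫_{S²} |(D(ŷ)h)(x̂)|² ds(ŷ); moreover, since h is zonal, E_h is a constant, equal to 4π Σ_p |h_p^0|²/(2p+1) · (2p+1)/(4π) summed appropriately, i.e., E_h = Σ_p |h_p^0|² = 1 after suitable normalization of the rotation measure (up to the constant factor arising from integrating over S² instead of SO(3)). -/

import Mathlib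

open Real MeasureTheory intervalIntegral ComplexConjugate

noncomputable section

/-- Associated Legendre function `P_ℓ^m` for nonnegative order `m`. -/
def assocLegendrePos (l m : ℕ) (x : ℝ) : ℝ :=
  ((-1 : ℝ) ^ m / ((2 : ℝ) ^ l * (Nat.factorial l : ℝ))) *
    (1 - x ^ 2) ^ ((m : ℝ) / 2) *
    iteratedDeriv (l + m) (fun t : ℝ => (t ^ 2 - 1) ^ l) x

/-- Associated Legendre function `P_ℓ^m` for integer order `m`. -/
def assocLegendre (l : ℕ) (m : ℤ) (x : ℝ) : ℝ :=
  if 0 ≤ m then assocLegendrePos l m.toNat x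
  else ((-1 : ℝ) ^ (-m).toNat *
    ((Nat.factorial (l - (-m).toNat) : ℝ) / (Nat.factorial (l + (-m).toNat) : ℝ))) *
    assocLegendrePos l (-m).toNat x

/-- Spherical harmonic normalization factor `N_ℓ^m`. -/
def shNorm (l : ℕ) (m : ℤ) : ℝ :=
  Real.sqrt ((2 * l + 1) / (4 * π) *
    ((Nat.factorial ((l : ℤ) - m).toNat : ℝ) / (Nat.factorial ((l : ℤ) + m).toNat : ℝ)))

/-- Spherical harmonic `Y_ℓ^m(θ, φ)`. -/
def sphHarm (l : ℕ) (m : ℤ) (θ φ : ℝ) : ℂ :=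
  ((shNorm l m * assocLegendre l m (Real.cos θ) : ℝ) : ℂ) *
    Complex.exp (Complex.I * (m : ℂ) * (φ : ℂ))

/-- Spherical harmonic coefficient `⟨f, Y_ℓ^m⟩ = ∫_{S²} f conj(Y_ℓ^m) ds`. -/
def shc (f : ℝ → ℝ → ℂ) (l : ℕ) (m : ℤ) : ℂ :=
  ∫ θ in (0 : ℝ)..π,
    (∫ φ in (0 : ℝ)..(2 * π), f θ φ * conj (sphHarm l m θ φ)) * ((Real.sin θ : ℝ) : ℂ)

/-- Degree `ℓ = ⌊√n⌋` of the single index `n`. -/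
def deg (n : ℕ) : ℕ := Nat.sqrt n

/-- Order `m = n − ⌊√n⌋² − ⌊√n⌋` of the single index `n`. -/
def ord (n : ℕ) : ℤ := (n : ℤ) - (Nat.sqrt n : ℤ) ^ 2 - (Nat.sqrt n : ℤ)

/-- Spherical harmonic `Y_n` under the index bijection `n = ℓ² + ℓ + m`. -/
def sphHarmIdx (n : ℕ) (θ φ : ℝ) : ℂ := sphHarm (deg n) (ord n) θ φ

/-- Spherical harmonic triple product `T(c; r; n) = ∫ Y_c Y_r conj(Y_n) ds`. -/
def tripleProd (c r n : ℕ) : ℂ :=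
  shc (fun θ φ => sphHarmIdx r θ φ * sphHarmIdx c θ φ) (deg n) (ord n)

/-!
Up to a constant, `Y_l^m` is `|sin θ|^|m| e^{imφ}` times a polynomial in `cos θ`, the `|m|`-th
derivative of the Legendre polynomial `P_l`. A product of two spherical harmonics of degrees `l`
and `l'` has the same shape, with a polynomial of so low a degree that it is band-limited to
`l + l'`. Hence Parseval's identity for `(D(ŷ)h) f` is a finite sum,
`∑_n |g_f(ŷ; n)|² = ∫ |(D(ŷ)h)(x̂)|² |f(x̂)|² ds(x̂)`, and integrating over `ŷ` with Fubini's
theorem gives the energy identity. Parseval's identity in `ŷ` turns `E_h` into the sum of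
`4π / (2p + 1) |h_p|² |Y_p^m(x̂)|²` over `p` and `m`. It is independent of `x̂` by Unsöld's theorem
`∑_m |Y_p^m|² = (2p + 1) / 4π`.
-/

section Rodrigues

open Polynomial

/-- The `k`-th derivative of `(X² - 1)^l`. By Rodrigues' formula `rodrigues l (l + q)` is
`2 ^ l * l!` times the `q`-th derivative of the Legendre polynomial `P_l`. -/
def rodrigues (l k : ℕ) : ℝ[X] := derivative^[k] ((X ^ 2 - 1) ^ l)

theorem derivative_rodrigues (l k : ℕ) : derivative (rodrigues l k) = rodrigues l (k + 1) :=
  (Function.iterate_succ_apply' _ _ _).symm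

theorem iteratedDeriv_sq_sub_one_pow (l k : ℕ) (x : ℝ) :
    iteratedDeriv k (fun t : ℝ => (t ^ 2 - 1) ^ l) x = (rodrigues l k).eval x := by
  induction k generalizing x with
  | zero => simp [rodrigues]
  | succ k ih => rw [iteratedDeriv_succ, funext ih, Polynomial.deriv, derivative_rodrigues]

theorem natDegree_sq_sub_one_pow (l : ℕ) : ((X ^ 2 - 1 : ℝ[X]) ^ l).natDegree = 2 * l := by
  rw [natDegree_pow, ← C_1, natDegree_X_pow_sub_C, mul_comm]

theorem natDegree_rodrigues_le (l q : ℕ) : (rodrigues l (l + q)).natDegree ≤ l - q := by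
  refine (natDegree_iterate_derivative _ _).trans ?_
  rw [natDegree_sq_sub_one_pow]
  lia

theorem rodrigues_eq_zero (l : ℕ) : rodrigues l (l + l + 1) = 0 :=
  iterate_derivative_eq_zero (by rw [natDegree_sq_sub_one_pow]; lia)

theorem degree_rodrigues {l q : ℕ} (hq : q ≤ l) : (rodrigues l (l + q)).degree = (l - q : ℕ) := by
  refine degree_eq_of_le_of_coeff_ne_zero
    (natDegree_le_iff_degree_le.mp (natDegree_rodrigues_le l q)) ?_
  have hlead : ((X ^ 2 - 1 : ℝ[X]) ^ l).coeff (2 * l) = 1 := by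
    rw [← natDegree_sq_sub_one_pow, ← C_1]
    exact (monic_X_pow_sub_C (1 : ℝ) two_ne_zero).pow l
  rw [rodrigues, coeff_iterate_derivative, show l - q + (l + q) = 2 * l by lia, hlead, nsmul_one,
    Nat.cast_ne_zero, Ne, Nat.descFactorial_eq_zero_iff_lt]
  lia

theorem eval_one_rodrigues (l : ℕ) : (rodrigues l l).eval 1 = 2 ^ l * l.factorial := by
  have hfactor : ((X ^ 2 - 1 : ℝ[X]) ^ l).map (algebraMap ℝ ℝ) =
      (X - C 1) ^ l * (X + 1) ^ l := by
    rw [Algebra.algebraMap_self, Polynomial.map_id, ← mul_pow, C_1]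
    ring
  have h := aeval_iterate_derivative_self ((X ^ 2 - 1 : ℝ[X]) ^ l) l (1 : ℝ) hfactor
  rw [coe_aeval_eq_eval] at h
  rw [rodrigues, h, eval_pow, eval_add, eval_X, eval_one, nsmul_eq_mul]
  norm_num [mul_comm]

/-- Obtained from `(X² - 1) y' = 2 l X y`, satisfied by `y = (X² - 1)^l`, by differentiating
`n + 1` times. -/
theorem rodrigues_ode (l n : ℕ) :
    (X ^ 2 - 1) * rodrigues l (n + 2) =
      (2 * (l - n - 1) : ℝ[X]) * X * rodrigues l (n + 1) +
        ((n + 1) * (2 * l - n) : ℝ[X]) * rodrigues l n := by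
  induction n with
  | zero =>
    have h : (X ^ 2 - 1) * rodrigues l 1 = (2 * l : ℝ[X]) * X * rodrigues l 0 := by
      cases l with
      | zero => simp [rodrigues]
      | succ l =>
        simp only [rodrigues, Function.iterate_one, Function.iterate_zero, id, derivative_pow_succ,
          map_add, map_natCast, map_one, derivative_sub, derivative_X, mul_one, Nat.cast_one,
          pow_one, derivative_one, sub_zero, Nat.cast_add]
        ring
    replace h := congrArg derivative h
    simp only [derivative_mul, derivative_sub, derivative_X_pow_succ, Nat.cast_one, map_add,
      map_one, pow_one, derivative_one, sub_zero, derivative_rodrigues, Nat.reduceAdd,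
      derivative_ofNat, zero_mul, derivative_natCast, mul_zero, add_zero, derivative_X, mul_one,
      zero_add] at h
    push_cast
    linear_combination h
  | succ n ih =>
    replace ih := congrArg derivative ih
    simp only [derivative_mul, derivative_sub, derivative_X_pow_succ, Nat.cast_one, map_add,
      map_one, pow_one, derivative_one, sub_zero, derivative_rodrigues,
      derivative_ofNat, zero_mul, derivative_natCast, sub_self, mul_zero, add_zero, derivative_X,
      mul_one, zero_add] at ih
    push_cast
    linear_combination ih

theorem derivative_one_sub_sq_pow_mul_rodrigues (l q : ℕ) :
    derivative ((1 - X ^ 2) ^ (q + 1) * rodrigues l (l + q + 1)) =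
      -C ((l + q + 1) * (l - q) : ℝ) * ((1 - X ^ 2) ^ q * rodrigues l (l + q)) := by
  have h := rodrigues_ode l (l + q)
  push_cast at h
  simp only [derivative_mul, derivative_pow, Nat.cast_add, Nat.cast_one, map_add, map_natCast,
    map_one, add_tsub_cancel_right, derivative_one, Nat.cast_ofNat, map_ofNat C 2,
    Nat.add_one_sub_one, pow_one, derivative_X, mul_one, zero_sub, derivative_rodrigues, map_mul,
    map_sub]
  linear_combination (-(1 - X ^ 2) ^ q) * h

/-- The ratio `(l - q)! / (l + q)!` in the normalization of spherical harmonics, meant for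
`q ≤ l`. -/
def factorialRatio (l q : ℕ) : ℝ := (l - q).factorial / (l + q).factorial

theorem factorialRatio_zero (l : ℕ) : factorialRatio l 0 = 1 := by
  simp [factorialRatio, Nat.factorial_ne_zero]

theorem factorialRatio_pos (l q : ℕ) : 0 < factorialRatio l q := by
  unfold factorialRatio
  positivity

theorem factorialRatio_succ_mul {l q : ℕ} (hq : q < l) :
    factorialRatio l (q + 1) * ((l + q + 1) * (l - q)) = factorialRatio l q := by
  have hsub : ((l - q).factorial : ℝ) = (l - q) * (l - (q + 1)).factorial := by
    rw [← Nat.mul_factorial_pred (by lia : l - q ≠ 0), Nat.sub_sub]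
    push_cast [hq.le]
    rfl
  have hadd : ((l + (q + 1)).factorial : ℝ) = (l + q + 1) * (l + q).factorial := by
    rw [← add_assoc, Nat.factorial_succ]
    push_cast
    rfl
  have : (l : ℝ) + q + 1 ≠ 0 := by positivity
  rw [factorialRatio, factorialRatio, hsub, hadd]
  field_simp

/-- `|Y_l^m|²` as a polynomial in `cos θ`, for `q = |m|`, up to a factor depending only on `l`. -/
def unsoldTerm (l q : ℕ) : ℝ[X] :=
  C (factorialRatio l q) * ((1 - X ^ 2) ^ q * (rodrigues l (l + q) * rodrigues l (l + q)))

theorem derivative_sum_unsoldTerm {l M : ℕ} (hM : M ≤ l) :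
    derivative (∑ m ∈ Finset.Icc (-M : ℤ) M, unsoldTerm l m.natAbs) =
      2 * C (factorialRatio l M) *
        ((1 - X ^ 2) ^ M * rodrigues l (l + M) * rodrigues l (l + M + 1)) := by
  induction M with
  | zero =>
    simp only [Nat.cast_zero, neg_zero, Finset.Icc_self, unsoldTerm, Finset.sum_singleton,
      Int.natAbs_zero, factorialRatio_zero, map_one, pow_zero, add_zero, one_mul, derivative_mul,
      derivative_rodrigues, mul_one]
    ring
  | succ M ih =>
    have hratio : C (factorialRatio l M) =
        C (factorialRatio l (M + 1)) * C ((l + M + 1) * (l - M) : ℝ) := by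
      rw [← C_mul, factorialRatio_succ_mul hM]
    have hterm : derivative (unsoldTerm l (M + 1)) =
        C (factorialRatio l (M + 1)) * ((1 - X ^ 2) ^ (M + 1) * rodrigues l (l + M + 1) *
          rodrigues l (l + M + 2)) - C (factorialRatio l M) * ((1 - X ^ 2) ^ M *
            rodrigues l (l + M) * rodrigues l (l + M + 1)) := by
      rw [unsoldTerm, ← add_assoc, ← mul_assoc ((1 - X ^ 2) ^ (M + 1)), derivative_C_mul,
        derivative_mul, derivative_one_sub_sq_pow_mul_rodrigues, derivative_rodrigues,
        hratio]
      ring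
    have habs : ((M : ℤ) + 1).natAbs = M + 1 := by lia
    push_cast
    rw [Finset.sum_Icc_succ_eq_add_endpoints, Int.natAbs_neg, habs, derivative_add, derivative_add,
      hterm, ih (by lia), ← add_assoc]
    ring

/-- Unsöld's theorem in polynomial form: the derivatives of the summands telescope, so the sum is
constant, and at `x = 1` only the term `m = 0` survives. -/
theorem sum_unsoldTerm (l : ℕ) :
    ∑ m ∈ Finset.Icc (-l : ℤ) l, unsoldTerm l m.natAbs = C ((2 ^ l * l.factorial : ℝ) ^ 2) := by
  set S := ∑ m ∈ Finset.Icc (-l : ℤ) l, unsoldTerm l m.natAbs with hS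
  have hconst : S = C (S.coeff 0) := eq_C_of_derivative_eq_zero <| by
    rw [hS, derivative_sum_unsoldTerm le_rfl, rodrigues_eq_zero, mul_zero, mul_zero]
  have hone : S.eval 1 = (2 ^ l * l.factorial : ℝ) ^ 2 := by
    rw [hS, eval_finsetSum, Finset.sum_eq_single_of_mem 0 (by simp) fun m _ hm => by
      simp [unsoldTerm, hm]]
    simp [unsoldTerm, factorialRatio_zero, eval_one_rodrigues, sq]
  rw [hconst, eval_C] at hone
  rw [hconst, hone]

/-- The linear functional `p ↦ ∫_{-1}^1 p(x) dx` on polynomials. -/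
def polyIntegral : ℝ[X] →ₗ[ℝ] ℝ where
  toFun p := ∫ x in (-1 : ℝ)..1, p.eval x
  map_add' p q := by
    simp only [eval_add]
    exact integral_add (p.continuous.intervalIntegrable _ _) (q.continuous.intervalIntegrable _ _)
  map_smul' c p := by simp

theorem polyIntegral_C (c : ℝ) : polyIntegral (C c) = 2 * c := by
  simp only [polyIntegral, LinearMap.coe_mk, AddHom.coe_mk, eval_C,
    intervalIntegral.integral_const, smul_eq_mul]
  norm_num

theorem polyIntegral_derivative (p : ℝ[X]) :
    polyIntegral (derivative p) = p.eval 1 - p.eval (-1) :=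
  integral_eq_sub_of_hasDerivAt (fun x _ => p.hasDerivAt x)
    (p.derivative.continuous.intervalIntegrable _ _)

theorem integral_eval_cos_mul_sin (p : ℝ[X]) :
    ∫ θ in (0 : ℝ)..π, p.eval (cos θ) * sin θ = polyIntegral p := by
  have h := integral_comp_mul_deriv (a := 0) (b := π) (fun θ _ => hasDerivAt_cos θ)
    continuous_sin.neg.continuousOn p.continuous
  rw [cos_zero, cos_pi, integral_symm (-1)] at h
  simpa [polyIntegral] using h

/-- The inner product of the `q`-th derivatives of the (unnormalized) Legendre polynomials of
degrees `l` and `l'` for the weight `(1 - x²)^q` on `[-1, 1]`. -/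
def legendreInner (l l' q : ℕ) : ℝ :=
  polyIntegral ((1 - X ^ 2) ^ q * (rodrigues l (l + q) * rodrigues l' (l' + q)))

theorem legendreInner_comm (l l' q : ℕ) : legendreInner l l' q = legendreInner l' l q := by
  rw [legendreInner, legendreInner, mul_comm (rodrigues l _)]

theorem legendreInner_succ (l l' q : ℕ) :
    legendreInner l l' (q + 1) = (l + q + 1) * (l - q) * legendreInner l l' q := by
  have h := polyIntegral_derivative
    ((1 - X ^ 2) ^ (q + 1) * rodrigues l (l + q + 1) * rodrigues l' (l' + q))
  rw [derivative_mul, derivative_one_sub_sq_pow_mul_rodrigues, derivative_rodrigues, ← C_neg,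
    mul_assoc, ← smul_eq_C_mul, map_add, map_smul, mul_assoc, mul_assoc] at h
  simp only [smul_eq_mul, eval_mul, eval_pow, eval_sub, eval_one, eval_X, one_pow, sub_self,
    even_two, Even.neg_pow, zero_pow (Nat.succ_ne_zero q), zero_mul] at h
  simp only [legendreInner, ← add_assoc]
  linear_combination h

/-- Integration by parts on either factor gives the eigenvalues `l (l + 1)` and `l' (l' + 1)`. -/
theorem legendreInner_of_ne {l l' : ℕ} (hl : l ≠ l') (q : ℕ) : legendreInner l l' q = 0 := by
  induction q with
  | zero =>
    have hll' := legendreInner_succ l l' 0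
    have hl'l := legendreInner_succ l' l 0
    rw [legendreInner_comm l' l, legendreInner_comm l' l] at hl'l
    have hmul : ((l : ℝ) - l') * (l + l' + 1) * legendreInner l l' 0 = 0 := by
      push_cast at hll' hl'l
      linear_combination hl'l - hll'
    have hsub : (l : ℝ) - l' ≠ 0 := sub_ne_zero.mpr (mod_cast hl)
    have hadd : (l : ℝ) + l' + 1 ≠ 0 := by positivity
    simpa [hsub, hadd] using hmul
  | succ q ih => rw [legendreInner_succ, ih, mul_zero]

theorem factorialRatio_mul_legendreInner_self {l q : ℕ} (hq : q ≤ l) :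
    factorialRatio l q * legendreInner l l q = legendreInner l l 0 := by
  induction q with
  | zero => rw [factorialRatio_zero, one_mul]
  | succ q ih => rw [← ih (by lia), legendreInner_succ, ← factorialRatio_succ_mul hq, ← mul_assoc]

theorem polyIntegral_unsoldTerm (l q : ℕ) :
    polyIntegral (unsoldTerm l q) = factorialRatio l q * legendreInner l l q := by
  rw [unsoldTerm, ← smul_eq_C_mul, map_smul, smul_eq_mul, legendreInner]

theorem legendreInner_self {l q : ℕ} (hq : q ≤ l) :
    (2 * l + 1) * (factorialRatio l q * legendreInner l l q) =
      2 * (2 ^ l * l.factorial : ℝ) ^ 2 := by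
  have h := congrArg polyIntegral (sum_unsoldTerm l)
  rw [map_sum, Finset.sum_congr rfl fun m hm => by
    rw [polyIntegral_unsoldTerm, factorialRatio_mul_legendreInner_self
      (by rw [Finset.mem_Icc] at hm; lia)]] at h
  have hcard : (Finset.Icc (-l : ℤ) l).card = 2 * l + 1 := by
    rw [Int.card_Icc]
    lia
  rw [Finset.sum_const, hcard, polyIntegral_C, nsmul_eq_mul] at h
  rw [factorialRatio_mul_legendreInner_self hq, ← h]
  push_cast
  rfl

/-- For fixed `q`, the `q`-th derivatives of the Legendre polynomials of degrees `q, q + 1, …`. -/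
def legendreSequence (q : ℕ) : Polynomial.Sequence ℝ where
  elems' d := rodrigues (q + d) (q + d + q)
  degree_eq' d := by rw [degree_rodrigues (Nat.le_add_right q d), Nat.add_sub_cancel_left]

end Rodrigues

section SphericalHarmonics

open Polynomial

/-- The function `|sin θ|^|m| R(cos θ) e^{imφ}`. Spherical harmonics of order `m` are of this form,
and for a fixed `m` these functions form a linear copy of the polynomials. -/
def azimuthalMode (m : ℤ) : ℝ[X] →ₗ[ℝ] (ℝ → ℝ → ℂ) where
  toFun R θ φ := ((|sin θ| ^ m.natAbs * R.eval (cos θ) : ℝ) : ℂ) *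
    Complex.exp (Complex.I * m * φ)
  map_add' R S := by
    funext θ φ
    simp only [eval_add, Pi.add_apply]
    push_cast
    ring
  map_smul' c R := by
    funext θ φ
    simp only [eval_smul, smul_eq_mul, RingHom.id_apply, Pi.smul_apply, Complex.real_smul]
    push_cast
    ring

theorem azimuthalMode_apply (m : ℤ) (R : ℝ[X]) (θ φ : ℝ) :
    azimuthalMode m R θ φ =
      ((|sin θ| ^ m.natAbs * R.eval (cos θ) : ℝ) : ℂ) * Complex.exp (Complex.I * m * φ) :=
  rfl

theorem continuous_azimuthalMode (m : ℤ) (R : ℝ[X]) :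
    Continuous fun p : ℝ × ℝ => azimuthalMode m R p.1 p.2 := by
  simp only [azimuthalMode_apply]
  have := R.continuous
  fun_prop

theorem conj_azimuthalMode (m : ℤ) (R : ℝ[X]) (θ φ : ℝ) :
    conj (azimuthalMode m R θ φ) = azimuthalMode (-m) R θ φ := by
  simp only [azimuthalMode_apply, map_mul, Complex.conj_ofReal, ← Complex.exp_conj,
    Complex.conj_I, map_intCast, Int.natAbs_neg]
  push_cast
  ring_nf

theorem azimuthalMode_mul {m m' : ℤ} {j : ℕ} (hj : m.natAbs + m'.natAbs = (m + m').natAbs + 2 * j)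
    (P Q : ℝ[X]) :
    azimuthalMode m P * azimuthalMode m' Q =
      azimuthalMode (m + m') ((1 - X ^ 2) ^ j * (P * Q)) := by
  funext θ φ
  have hsin : |sin θ| ^ (m + m').natAbs * (1 - cos θ ^ 2) ^ j =
      |sin θ| ^ m.natAbs * |sin θ| ^ m'.natAbs := by
    rw [← pow_add, hj, pow_add, pow_mul, sq_abs, sin_sq]
  have hexp : Complex.exp (Complex.I * (m + m' : ℤ) * φ) =
      Complex.exp (Complex.I * m * φ) * Complex.exp (Complex.I * m' * φ) := by
    rw [← Complex.exp_add]
    push_cast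
    ring_nf
  simp only [Pi.mul_apply, azimuthalMode_apply, eval_mul, eval_pow, eval_sub, eval_one, eval_X]
  rw [hexp, ← mul_assoc (|sin θ| ^ _), hsin]
  push_cast
  ring

theorem normSq_azimuthalMode (m : ℤ) (R : ℝ[X]) (θ φ : ℝ) :
    Complex.normSq (azimuthalMode m R θ φ) =
      ((1 - X ^ 2) ^ m.natAbs * (R * R)).eval (cos θ) := by
  have h := congrFun₂ (azimuthalMode_mul (m := m) (m' := -m) (j := m.natAbs) (by lia) R R) θ φ
  rw [Pi.mul_apply, Pi.mul_apply, ← conj_azimuthalMode, Complex.mul_conj] at h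
  simpa [azimuthalMode_apply, -eval_mul, ← Complex.ofReal_inj] using h

/-- The factor relating `sphHarm l m` to `azimuthalMode m (rodrigues l (l + |m|))`. -/
def sphHarmCoeff (l : ℕ) (m : ℤ) : ℝ :=
  shNorm l m * (if 0 ≤ m then (-1) ^ m.natAbs else factorialRatio l m.natAbs) /
    (2 ^ l * l.factorial)

theorem one_sub_cos_sq_rpow_half (q : ℕ) (θ : ℝ) :
    (1 - cos θ ^ 2) ^ ((q : ℝ) / 2) = |sin θ| ^ q := by
  rw [← sin_sq, ← sq_abs, ← Real.rpow_natCast, ← Real.rpow_mul (abs_nonneg _),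
    ← Real.rpow_natCast]
  congr 1
  push_cast
  ring

theorem assocLegendrePos_cos (l q : ℕ) (θ : ℝ) :
    assocLegendrePos l q (cos θ) = (-1) ^ q / (2 ^ l * l.factorial) *
      (|sin θ| ^ q * (rodrigues l (l + q)).eval (cos θ)) := by
  rw [assocLegendrePos, one_sub_cos_sq_rpow_half, iteratedDeriv_sq_sub_one_pow, mul_assoc]

theorem sphHarm_eq_smul_azimuthalMode (l : ℕ) (m : ℤ) :
    sphHarm l m = sphHarmCoeff l m • azimuthalMode m (rodrigues l (l + m.natAbs)) := by
  funext θ φ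
  simp only [Pi.smul_apply, azimuthalMode_apply, Complex.real_smul, ← mul_assoc,
    ← Complex.ofReal_mul, sphHarm, assocLegendre, sphHarmCoeff]
  congr 2
  rcases le_or_gt 0 m with hm | hm
  · rw [if_pos hm, if_pos hm, assocLegendrePos_cos, show m.toNat = m.natAbs by lia]
    ring
  · have hsign : ((-1 : ℝ) ^ m.natAbs) * (-1) ^ m.natAbs = 1 := by
      rw [← mul_pow, neg_one_mul, neg_neg, one_pow]
    rw [if_neg hm.not_ge, if_neg hm.not_ge, assocLegendrePos_cos,
      show (-m).toNat = m.natAbs by lia, factorialRatio]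
    linear_combination shNorm l m * ((l - m.natAbs).factorial / (l + m.natAbs).factorial) /
      (2 ^ l * l.factorial) * (|sin θ| ^ m.natAbs * (rodrigues l (l + m.natAbs)).eval (cos θ)) *
        hsign

theorem sphHarmCoeff_sq {l : ℕ} {m : ℤ} (hm : m.natAbs ≤ l) :
    sphHarmCoeff l m ^ 2 =
      (2 * l + 1) / (4 * π) / (2 ^ l * l.factorial) ^ 2 * factorialRatio l m.natAbs := by
  have hsq : shNorm l m ^ 2 = (2 * l + 1) / (4 * π) *
      (((l - m).toNat.factorial : ℝ) / ((l + m).toNat.factorial : ℝ)) := by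
    rw [shNorm, Real.sq_sqrt (by positivity)]
  rw [sphHarmCoeff, div_pow, mul_pow, hsq]
  rcases le_or_gt 0 m with h0 | h0
  · rw [if_pos h0, ← pow_mul, pow_mul', neg_one_sq, one_pow, factorialRatio,
      show ((l : ℤ) - m).toNat = l - m.natAbs by lia,
      show ((l : ℤ) + m).toNat = l + m.natAbs by lia]
    ring
  · rw [if_neg h0.not_ge, factorialRatio, show ((l : ℤ) - m).toNat = l + m.natAbs by lia,
      show ((l : ℤ) + m).toNat = l - m.natAbs by lia]
    have := Nat.factorial_ne_zero (l - m.natAbs)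
    have := Nat.factorial_ne_zero (l + m.natAbs)
    field_simp

theorem sphHarmCoeff_ne_zero {l : ℕ} {m : ℤ} (hm : m.natAbs ≤ l) : sphHarmCoeff l m ≠ 0 := by
  have hratio := factorialRatio_pos l m.natAbs
  rw [← sq_pos_iff, sphHarmCoeff_sq hm]
  positivity

theorem continuous_sphHarm (l : ℕ) (m : ℤ) :
    Continuous fun p : ℝ × ℝ => sphHarm l m p.1 p.2 := by
  rw [sphHarm_eq_smul_azimuthalMode]
  exact (continuous_azimuthalMode m _).const_smul (sphHarmCoeff l m)

theorem normSq_sphHarm {l : ℕ} {m : ℤ} (hm : m.natAbs ≤ l) (θ φ : ℝ) :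
    Complex.normSq (sphHarm l m θ φ) =
      (2 * l + 1) / (4 * π) / (2 ^ l * l.factorial) ^ 2 *
        (unsoldTerm l m.natAbs).eval (cos θ) := by
  rw [sphHarm_eq_smul_azimuthalMode, Pi.smul_apply, Pi.smul_apply, Complex.real_smul,
    Complex.normSq_mul, Complex.normSq_ofReal, normSq_azimuthalMode, ← sq, sphHarmCoeff_sq hm,
    unsoldTerm, eval_C_mul, mul_assoc]

theorem sum_normSq_sphHarm (l : ℕ) (θ φ : ℝ) :
    ∑ m ∈ Finset.Icc (-l : ℤ) l, Complex.normSq (sphHarm l m θ φ) = (2 * l + 1) / (4 * π) := by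
  rw [Finset.sum_congr rfl fun m hm => normSq_sphHarm (by rw [Finset.mem_Icc] at hm; lia) θ φ,
    ← Finset.mul_sum, ← eval_finsetSum, sum_unsoldTerm, eval_C,
    div_mul_cancel₀ _ (by positivity)]

end SphericalHarmonics

section Indexing

theorem natAbs_ord_le_deg (n : ℕ) : (ord n).natAbs ≤ deg n := by
  have hlow := Nat.sqrt_le' n
  have hupp := Nat.lt_succ_sqrt' n
  unfold ord deg
  zify at *
  rw [abs_le]
  constructor <;> nlinarith

theorem deg_le_iff {n L : ℕ} : deg n ≤ L ↔ n < L ^ 2 + 2 * L + 1 := by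
  rw [← Nat.lt_succ_iff, deg, Nat.sqrt_lt']
  lia

theorem eq_of_deg_eq_of_ord_eq {n k : ℕ} (hdeg : deg n = deg k) (hord : ord n = ord k) :
    n = k := by
  unfold deg at hdeg
  unfold ord at hord
  rw [hdeg] at hord
  lia

theorem exists_deg_eq_ord_eq {l : ℕ} {m : ℤ} (hm : m.natAbs ≤ l) :
    ∃ n, deg n = l ∧ ord n = m := by
  have hdeg : Nat.sqrt (l ^ 2 + (m + l).toNat) = l := Nat.sqrt_add_eq' l (by lia)
  refine ⟨l ^ 2 + (m + l).toNat, hdeg, ?_⟩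
  rw [ord, hdeg]
  push_cast
  lia

theorem sum_range_deg_ord {M : Type*} [AddCommMonoid M] (L : ℕ) (F : ℕ → ℤ → M) :
    ∑ n ∈ Finset.range (L ^ 2 + 2 * L + 1), F (deg n) (ord n) =
      ∑ p ∈ Finset.range (L + 1), ∑ m ∈ Finset.Icc (-p : ℤ) p, F p m := by
  rw [Finset.sum_sigma']
  refine Finset.sum_bij (fun n _ => ⟨deg n, ord n⟩) (fun n hn => ?_) (fun n _ k _ h => ?_)
    (fun ⟨p, m⟩ hpm => ?_) fun _ _ => rfl
  · have := natAbs_ord_le_deg n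
    rw [Finset.mem_range, ← deg_le_iff] at hn
    simp only [Finset.mem_sigma, Finset.mem_range, Finset.mem_Icc]
    lia
  · rw [Sigma.mk.injEq, heq_eq_eq] at h
    exact eq_of_deg_eq_of_ord_eq h.1 h.2
  · simp only [Finset.mem_sigma, Finset.mem_range, Finset.mem_Icc] at hpm
    obtain ⟨n, rfl, rfl⟩ := exists_deg_eq_ord_eq (l := p) (m := m) (by lia)
    exact ⟨n, Finset.mem_range.mpr (deg_le_iff.mp (by lia)), rfl⟩

end Indexing

section SphereMeasure

open Set

/-- The surface measure `sin θ dθ dφ` of the unit sphere in polar coordinates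
`(θ, φ) ∈ [0, π] × [0, 2π]`. -/
def sphereMeasure : Measure (ℝ × ℝ) :=
  (volume.withDensity fun p => ENNReal.ofReal (sin p.1)).restrict (Icc 0 π ×ˢ Icc 0 (2 * π))

theorem isCompact_polarRectangle : IsCompact (Icc 0 π ×ˢ Icc 0 (2 * π)) :=
  isCompact_Icc.prod isCompact_Icc

instance isLocallyFiniteMeasure_sin_density : IsLocallyFiniteMeasure
    ((volume : Measure (ℝ × ℝ)).withDensity fun p => ENNReal.ofReal (sin p.1)) :=
  IsLocallyFiniteMeasure.withDensity_ofReal (continuous_sin.comp continuous_fst)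

instance isFiniteMeasure_sphereMeasure : IsFiniteMeasure sphereMeasure :=
  isFiniteMeasure_restrict.mpr isCompact_polarRectangle.measure_lt_top.ne

variable {E : Type*} [NormedAddCommGroup E]

theorem integrable_sphereMeasure {F : ℝ × ℝ → E} (hF : Continuous F) :
    Integrable F sphereMeasure :=
  hF.locallyIntegrable.integrableOn_isCompact isCompact_polarRectangle

variable [NormedSpace ℝ E]

theorem integral_sphereMeasure {F : ℝ × ℝ → E} (hF : Continuous F) :
    ∫ p, F p ∂sphereMeasure =
      ∫ θ in (0 : ℝ)..π, sin θ • ∫ φ in (0 : ℝ)..(2 * π), F (θ, φ) := by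
  have hsin : Continuous fun p : ℝ × ℝ => sin p.1 := continuous_sin.comp continuous_fst
  have hF' : IntegrableOn (fun p : ℝ × ℝ => sin p.1 • F p) (Icc 0 π ×ˢ Icc 0 (2 * π)) :=
    (hsin.smul hF).locallyIntegrable.integrableOn_isCompact isCompact_polarRectangle
  calc ∫ p, F p ∂sphereMeasure
      = ∫ p in Icc 0 π ×ˢ Icc 0 (2 * π), (ENNReal.ofReal (sin p.1)).toReal • F p :=
        setIntegral_withDensity_eq_setIntegral_toReal_smul hsin.measurable.ennreal_ofReal
          (by simp) _ isCompact_polarRectangle.measurableSet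
    _ = ∫ p in Icc 0 π ×ˢ Icc 0 (2 * π), sin p.1 • F p :=
        setIntegral_congr_fun isCompact_polarRectangle.measurableSet fun p hp => by
          simp only [ENNReal.toReal_ofReal (sin_nonneg_of_mem_Icc hp.1)]
    _ = ∫ θ in Icc 0 π, ∫ φ in Icc 0 (2 * π), sin θ • F (θ, φ) := setIntegral_prod _ hF'
    _ = ∫ θ in (0 : ℝ)..π, sin θ • ∫ φ in (0 : ℝ)..(2 * π), F (θ, φ) := by
        simp only [integral_Icc_eq_integral_Ioc, integral_of_le pi_nonneg,
          integral_of_le two_pi_pos.le, MeasureTheory.integral_smul]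

theorem integral_sphereMeasure_real {F : ℝ × ℝ → ℝ} (hF : Continuous F) :
    ∫ p, F p ∂sphereMeasure =
      ∫ θ in (0 : ℝ)..π, (∫ φ in (0 : ℝ)..(2 * π), F (θ, φ)) * sin θ := by
  simp only [integral_sphereMeasure hF, smul_eq_mul, mul_comm]

theorem shc_eq_integral {F : ℝ → ℝ → ℂ} (hF : Continuous fun p : ℝ × ℝ => F p.1 p.2)
    (l : ℕ) (m : ℤ) :
    shc F l m = ∫ p, F p.1 p.2 * conj (sphHarm l m p.1 p.2) ∂sphereMeasure := by
  have hcont : Continuous fun p : ℝ × ℝ => F p.1 p.2 * conj (sphHarm l m p.1 p.2) :=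
    hF.mul (Complex.continuous_conj.comp (continuous_sphHarm l m))
  simp only [integral_sphereMeasure hcont, shc, Complex.real_smul, mul_comm]

theorem continuous_integral_sphereMeasure {X : Type*} [TopologicalSpace X]
    [FirstCountableTopology X] [LocallyCompactSpace X] {F : X → ℝ × ℝ → E} (hF : Continuous ↿F) :
    Continuous fun x => ∫ p, F x p ∂sphereMeasure :=
  continuous_parametric_integral_of_continuous hF isCompact_polarRectangle

theorem integral_integral_sphereMeasure_swap {F : ℝ × ℝ → ℝ × ℝ → E} (hF : Continuous ↿F) :
    ∫ p, ∫ q, F p q ∂sphereMeasure ∂sphereMeasure =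
      ∫ q, ∫ p, F p q ∂sphereMeasure ∂sphereMeasure := by
  refine integral_integral_swap ?_
  rw [sphereMeasure, Measure.prod_restrict]
  exact hF.locallyIntegrable.integrableOn_isCompact
    (isCompact_polarRectangle.prod isCompact_polarRectangle)

end SphereMeasure

section Orthonormality

open Polynomial

theorem integral_cexp_I_int_mul (k : ℤ) :
    ∫ φ in (0 : ℝ)..(2 * π), Complex.exp (Complex.I * k * φ) =
      if k = 0 then 2 * (π : ℂ) else 0 := by
  split_ifs with h
  · simp [h]
  · have hperiod : Complex.exp (Complex.I * k * (2 * π : ℝ)) = 1 :=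
      Complex.exp_eq_one_iff.mpr ⟨k, by push_cast; ring⟩
    rw [integral_exp_mul_complex (by simp [h]), hperiod]
    simp

theorem integral_azimuthalMode (m : ℤ) (R : ℝ[X]) :
    ∫ p, azimuthalMode m R p.1 p.2 ∂sphereMeasure =
      if m = 0 then ((2 * π * polyIntegral R : ℝ) : ℂ) else 0 := by
  rw [integral_sphereMeasure (continuous_azimuthalMode m R)]
  simp only [azimuthalMode_apply, intervalIntegral.integral_const_mul, integral_cexp_I_int_mul]
  split_ifs with hm
  · subst hm
    rw [← integral_eval_cos_mul_sin, ← intervalIntegral.integral_const_mul,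
      ← intervalIntegral.integral_ofReal]
    congr! 2 with θ
    simp only [Int.natAbs_zero, pow_zero, one_mul, Complex.real_smul]
    push_cast
    ring
  · simp

theorem integral_azimuthalMode_mul_conj (m m' : ℤ) (P Q : ℝ[X]) :
    ∫ p, azimuthalMode m P p.1 p.2 * conj (azimuthalMode m' Q p.1 p.2) ∂sphereMeasure =
      if m = m' then ((2 * π * polyIntegral ((1 - X ^ 2) ^ m.natAbs * (P * Q)) : ℝ) : ℂ)
      else 0 := by
  obtain ⟨j, hj⟩ : ∃ j, m.natAbs + (-m').natAbs = (m + -m').natAbs + 2 * j :=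
    ⟨(m.natAbs + (-m').natAbs - (m + -m').natAbs) / 2, by lia⟩
  have hmul (p : ℝ × ℝ) : azimuthalMode m P p.1 p.2 * conj (azimuthalMode m' Q p.1 p.2) =
      azimuthalMode (m + -m') ((1 - X ^ 2) ^ j * (P * Q)) p.1 p.2 := by
    rw [conj_azimuthalMode, ← azimuthalMode_mul hj]
    rfl
  simp only [hmul, integral_azimuthalMode, ← sub_eq_add_neg, sub_eq_zero]
  split_ifs with hm
  · rw [show j = m.natAbs by lia]
  · rfl

theorem integral_sphHarm_mul_conj {l l' : ℕ} {m m' : ℤ} (hm : m.natAbs ≤ l) :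
    ∫ p, sphHarm l m p.1 p.2 * conj (sphHarm l' m' p.1 p.2) ∂sphereMeasure =
      if l = l' ∧ m = m' then 1 else 0 := by
  have hscale (p : ℝ × ℝ) : sphHarm l m p.1 p.2 * conj (sphHarm l' m' p.1 p.2) =
      (sphHarmCoeff l m * sphHarmCoeff l' m' : ℝ) •
        (azimuthalMode m (rodrigues l (l + m.natAbs)) p.1 p.2 *
          conj (azimuthalMode m' (rodrigues l' (l' + m'.natAbs)) p.1 p.2)) := by
    simp only [sphHarm_eq_smul_azimuthalMode, Pi.smul_apply, Complex.real_smul, map_mul,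
      Complex.conj_ofReal]
    push_cast
    ring
  simp only [hscale, MeasureTheory.integral_smul, integral_azimuthalMode_mul_conj]
  by_cases hmm : m = m'
  · subst hmm
    rw [if_pos rfl, ← legendreInner, Complex.real_smul, ← Complex.ofReal_mul]
    by_cases hll : l = l'
    · subst hll
      have hnorm : sphHarmCoeff l m * sphHarmCoeff l m *
          (2 * π * legendreInner l l m.natAbs) = 1 := by
        have : (0 : ℝ) < 2 ^ l * l.factorial := by positivity
        rw [← sq, sphHarmCoeff_sq hm]
        field_simp
        linear_combination 2 * legendreInner_self hm
      rw [hnorm]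
      simp
    · simp [hll, legendreInner_of_ne hll]
  · simp [hmm]

theorem integral_sphHarmIdx_mul_conj (n k : ℕ) :
    ∫ p, sphHarmIdx n p.1 p.2 * conj (sphHarmIdx k p.1 p.2) ∂sphereMeasure =
      if n = k then 1 else 0 := by
  have hiff : deg n = deg k ∧ ord n = ord k ↔ n = k :=
    ⟨fun h => eq_of_deg_eq_of_ord_eq h.1 h.2, by rintro rfl; exact ⟨rfl, rfl⟩⟩
  simp only [sphHarmIdx, integral_sphHarm_mul_conj (natAbs_ord_le_deg n), hiff]

theorem continuous_sphHarmIdx (n : ℕ) : Continuous fun p : ℝ × ℝ => sphHarmIdx n p.1 p.2 :=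
  continuous_sphHarm _ _

end Orthonormality

section Parseval

variable {ι α : Type*} [DecidableEq ι] [MeasurableSpace α] {μ : Measure α} {e : ι → α → ℂ}

theorem integral_sum_mul_conj_of_orthonormal
    (hint : ∀ i j, Integrable (fun x => e i x * conj (e j x)) μ)
    (horth : ∀ i j, ∫ x, e i x * conj (e j x) ∂μ = if i = j then 1 else 0)
    {s : Finset ι} (a : ι → ℂ) {k : ι} (hk : k ∈ s) :
    ∫ x, (∑ i ∈ s, a i * e i x) * conj (e k x) ∂μ = a k := by
  simp only [Finset.sum_mul, mul_assoc]
  rw [integral_finsetSum _ fun i _ => (hint i k).const_mul (a i)]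
  simp only [MeasureTheory.integral_const_mul, horth, mul_ite, mul_one, mul_zero,
    Finset.sum_ite_eq', if_pos hk]

theorem integral_normSq_sum_of_orthonormal
    (hint : ∀ i j, Integrable (fun x => e i x * conj (e j x)) μ)
    (horth : ∀ i j, ∫ x, e i x * conj (e j x) ∂μ = if i = j then 1 else 0)
    (s : Finset ι) (a : ι → ℂ) :
    ∫ x, Complex.normSq (∑ i ∈ s, a i * e i x) ∂μ = ∑ i ∈ s, Complex.normSq (a i) := by
  have hexpand (x : α) : ((Complex.normSq (∑ i ∈ s, a i * e i x) : ℝ) : ℂ) =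
      ∑ k ∈ s, conj (a k) * ((∑ i ∈ s, a i * e i x) * conj (e k x)) := by
    rw [← Complex.mul_conj, map_sum, Finset.mul_sum]
    exact Finset.sum_congr rfl fun k _ => by rw [map_mul]; ring
  have hterm (k : ι) : Integrable (fun x => (∑ i ∈ s, a i * e i x) * conj (e k x)) μ := by
    simp only [Finset.sum_mul, mul_assoc]
    exact integrable_finsetSum _ fun i _ => (hint i k).const_mul (a i)
  apply Complex.ofReal_injective
  rw [← integral_complex_ofReal, funext hexpand,
    integral_finsetSum _ fun k _ => (hterm k).const_mul _, Complex.ofReal_sum]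
  refine Finset.sum_congr rfl fun k hk => ?_
  rw [MeasureTheory.integral_const_mul, integral_sum_mul_conj_of_orthonormal hint horth a hk,
    mul_comm, Complex.mul_conj]

end Parseval

section BandLimited

open Polynomial

/-- The functions on the sphere, in polar coordinates, that are combinations of spherical harmonics
of degree at most `L`. -/
def bandLimited (L : ℕ) : Submodule ℂ (ℝ → ℝ → ℂ) :=
  Submodule.span ℂ (sphHarmIdx '' {n | deg n ≤ L})

theorem mem_bandLimited_iff {L : ℕ} {F : ℝ → ℝ → ℂ} :
    F ∈ bandLimited L ↔
      ∃ a : ℕ → ℂ,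
        (fun θ φ => ∑ n ∈ Finset.range (L ^ 2 + 2 * L + 1), a n * sphHarmIdx n θ φ) = F := by
  have hrange : {n | deg n ≤ L} = Finset.range (L ^ 2 + 2 * L + 1) := by
    ext n
    rw [Set.mem_ofPred_eq, deg_le_iff, Finset.mem_coe, Finset.mem_range]
  rw [bandLimited, hrange, Submodule.mem_span_image_finset_iff_exists_fun']
  refine exists_congr fun a => Eq.congr_left ?_
  funext θ φ
  simp only [Finset.sum_apply, Pi.smul_apply, smul_eq_mul]

theorem continuous_of_mem_bandLimited {L : ℕ} {F : ℝ → ℝ → ℂ} (hF : F ∈ bandLimited L) :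
    Continuous fun p : ℝ × ℝ => F p.1 p.2 := by
  obtain ⟨a, rfl⟩ := mem_bandLimited_iff.mp hF
  exact continuous_finsetSum _ fun n _ => continuous_const.mul (continuous_sphHarmIdx n)

theorem sphHarm_mem_bandLimited {l L : ℕ} {m : ℤ} (hm : m.natAbs ≤ l) (hl : l ≤ L) :
    sphHarm l m ∈ bandLimited L := by
  obtain ⟨n, rfl, rfl⟩ := exists_deg_eq_ord_eq hm
  exact Submodule.subset_span ⟨n, hl, rfl⟩

theorem azimuthalMode_mem_bandLimited {L : ℕ} {m : ℤ} {R : ℝ[X]}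
    (hR : R.natDegree + m.natAbs ≤ L) : azimuthalMode m R ∈ bandLimited L := by
  have hspan : R ∈ Submodule.span ℝ (legendreSequence m.natAbs '' Set.Iic R.natDegree) := by
    rw [Sequence.span_degreeLE _ fun d _ =>
      (leadingCoeff_ne_zero.mpr ((legendreSequence m.natAbs).ne_zero d)).isUnit, mem_degreeLE]
    exact degree_le_natDegree
  suffices h : Submodule.span ℝ (legendreSequence m.natAbs '' Set.Iic R.natDegree) ≤
      ((bandLimited L).restrictScalars ℝ).comap (azimuthalMode m) from h hspan
  rw [Submodule.span_le]
  rintro _ ⟨d, hd, rfl⟩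
  have hm : m.natAbs ≤ m.natAbs + d := Nat.le_add_right _ _
  have hmem : sphHarm (m.natAbs + d) m ∈ (bandLimited L).restrictScalars ℝ :=
    sphHarm_mem_bandLimited hm (by rw [Set.mem_Iic] at hd; lia)
  rw [sphHarm_eq_smul_azimuthalMode,
    Submodule.smul_mem_iff _ (sphHarmCoeff_ne_zero hm)] at hmem
  exact hmem

theorem sphHarm_mul_sphHarm_mem_bandLimited {l l' : ℕ} {m m' : ℤ} (hm : m.natAbs ≤ l)
    (hm' : m'.natAbs ≤ l') : sphHarm l m * sphHarm l' m' ∈ bandLimited (l + l') := by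
  obtain ⟨j, hj⟩ : ∃ j, m.natAbs + m'.natAbs = (m + m').natAbs + 2 * j :=
    ⟨(m.natAbs + m'.natAbs - (m + m').natAbs) / 2, by lia⟩
  set P := rodrigues l (l + m.natAbs)
  set Q := rodrigues l' (l' + m'.natAbs)
  have hdeg : ((1 - X ^ 2) ^ j * (P * Q)).natDegree ≤
      j * 2 + ((l - m.natAbs) + (l' - m'.natAbs)) :=
    natDegree_mul_le_of_le (natDegree_pow_le_of_le j (by compute_degree))
      (natDegree_mul_le_of_le (natDegree_rodrigues_le _ _) (natDegree_rodrigues_le _ _))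
  rw [sphHarm_eq_smul_azimuthalMode, sphHarm_eq_smul_azimuthalMode, smul_mul_smul_comm,
    azimuthalMode_mul hj]
  exact ((bandLimited (l + l')).restrictScalars ℝ).smul_mem _
    (azimuthalMode_mem_bandLimited (by lia))

theorem bandLimited_mono {L M : ℕ} (hLM : L ≤ M) : bandLimited L ≤ bandLimited M :=
  Submodule.span_mono (Set.image_mono fun _ hn => le_trans hn hLM)

theorem bandLimited_mul_le (L M : ℕ) :
    bandLimited L * bandLimited M ≤ bandLimited (L + M) := by
  rw [bandLimited, bandLimited, Submodule.span_mul_span, Submodule.span_le]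
  rintro _ ⟨_, ⟨n, hn, rfl⟩, _, ⟨k, hk, rfl⟩, rfl⟩
  exact bandLimited_mono (add_le_add hn hk)
    (sphHarm_mul_sphHarm_mem_bandLimited (natAbs_ord_le_deg n) (natAbs_ord_le_deg k))

theorem integrable_sphHarmIdx_mul_conj (n k : ℕ) :
    Integrable (fun p : ℝ × ℝ => sphHarmIdx n p.1 p.2 * conj (sphHarmIdx k p.1 p.2))
      sphereMeasure :=
  integrable_sphereMeasure <|
    (continuous_sphHarmIdx n).mul (Complex.continuous_conj.comp (continuous_sphHarmIdx k))

theorem integral_normSq_sum_sphHarmIdx (s : Finset ℕ) (a : ℕ → ℂ) :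
    ∫ p, Complex.normSq (∑ n ∈ s, a n * sphHarmIdx n p.1 p.2) ∂sphereMeasure =
      ∑ n ∈ s, Complex.normSq (a n) :=
  integral_normSq_sum_of_orthonormal integrable_sphHarmIdx_mul_conj integral_sphHarmIdx_mul_conj
    s a

theorem sum_normSq_shc {L : ℕ} {F : ℝ → ℝ → ℂ} (hF : F ∈ bandLimited L) :
    ∑ n ∈ Finset.range (L ^ 2 + 2 * L + 1), Complex.normSq (shc F (deg n) (ord n)) =
      ∫ p, Complex.normSq (F p.1 p.2) ∂sphereMeasure := by
  have hcont := continuous_of_mem_bandLimited hF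
  obtain ⟨a, rfl⟩ := mem_bandLimited_iff.mp hF
  rw [integral_normSq_sum_sphHarmIdx]
  refine Finset.sum_congr rfl fun k hk => congrArg _ ?_
  rw [shc_eq_integral hcont]
  exact integral_sum_mul_conj_of_orthonormal integrable_sphHarmIdx_mul_conj
    integral_sphHarmIdx_mul_conj a hk

end BandLimited

section EnergyConservation

theorem continuous_shc {X : Type*} [TopologicalSpace X] [FirstCountableTopology X]
    [LocallyCompactSpace X] {F : X → ℝ → ℝ → ℂ}
    (hF : Continuous fun q : X × (ℝ × ℝ) => F q.1 q.2.1 q.2.2) (l : ℕ) (m : ℤ) :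
    Continuous fun x => shc (F x) l m := by
  have hF' (x : X) : Continuous fun p : ℝ × ℝ => F x p.1 p.2 :=
    hF.along_snd
  simp only [fun x => shc_eq_integral (hF' x) l m]
  exact continuous_integral_sphereMeasure <|
    hF.mul (Complex.continuous_conj.comp ((continuous_sphHarm l m).comp continuous_snd))

theorem sum_integral_normSq_shc_mul {L M : ℕ} {K : ℝ × ℝ → ℝ → ℝ → ℂ} {f : ℝ → ℝ → ℂ}
    (hK : Continuous fun q : (ℝ × ℝ) × (ℝ × ℝ) => K q.1 q.2.1 q.2.2)
    (hKL : ∀ y, K y ∈ bandLimited L) (hf : f ∈ bandLimited M) :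
    ∑ n ∈ Finset.range ((L + M) ^ 2 + 2 * (L + M) + 1),
        ∫ y, Complex.normSq (shc (K y * f) (deg n) (ord n)) ∂sphereMeasure =
      ∫ x, Complex.normSq (f x.1 x.2) * ∫ y, Complex.normSq (K y x.1 x.2) ∂sphereMeasure
        ∂sphereMeasure := by
  have hKf : Continuous fun q : (ℝ × ℝ) × (ℝ × ℝ) => (K q.1 * f) q.2.1 q.2.2 :=
    hK.mul ((continuous_of_mem_bandLimited hf).comp continuous_snd)
  calc _ = ∫ y, ∑ n ∈ Finset.range ((L + M) ^ 2 + 2 * (L + M) + 1),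
          Complex.normSq (shc (K y * f) (deg n) (ord n)) ∂sphereMeasure :=
        (integral_finsetSum _ fun n _ => integrable_sphereMeasure <|
          Complex.continuous_normSq.comp (continuous_shc hKf _ _)).symm
    _ = ∫ y, ∫ x, Complex.normSq ((K y * f) x.1 x.2) ∂sphereMeasure ∂sphereMeasure := by
        simp only [fun y => sum_normSq_shc
          (bandLimited_mul_le L M (Submodule.mul_mem_mul (hKL y) hf))]
    _ = ∫ x, ∫ y, Complex.normSq ((K y * f) x.1 x.2) ∂sphereMeasure ∂sphereMeasure :=
        integral_integral_sphereMeasure_swap (Complex.continuous_normSq.comp hKf)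
    _ = _ := by
        simp only [Pi.mul_apply, Complex.normSq_mul, mul_comm (Complex.normSq (K _ _ _)),
          MeasureTheory.integral_const_mul]

/-- The zonal window `h = ∑ₚ hₚ Yₚ⁰` of degree at most `L`, rotated so that its axis points in the
direction `(ϑ, φ₀)`. This is the expansion of `D(ŷ)h` in spherical harmonics. -/
def rotatedWindow (L : ℕ) (h : ℕ → ℂ) (ϑ φ₀ θ φ : ℝ) : ℂ :=
  ∑ r ∈ Finset.range (L ^ 2 + 2 * L + 1),
    ((Real.sqrt (4 * π / (2 * deg r + 1)) : ℝ) : ℂ) * conj (sphHarmIdx r ϑ φ₀) *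
      h (deg r) * sphHarmIdx r θ φ

/-- The SLSHT distribution `g_f((ϑ, φ₀); n)` of `f` for the zonal window `h`. -/
def slsht (L : ℕ) (h : ℕ → ℂ) (f : ℝ → ℝ → ℂ) (ϑ φ₀ : ℝ) (n : ℕ) : ℂ :=
  shc (fun θ φ => rotatedWindow L h ϑ φ₀ θ φ * f θ φ) (deg n) (ord n)

/-- The energy `E_h(θ, φ)` received at a point from all rotations of the zonal window `h`. -/
def windowEnergy (L : ℕ) (h : ℕ → ℂ) (θ φ : ℝ) : ℝ :=
  ∫ ϑ in (0 : ℝ)..π,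
    (∫ φ₀ in (0 : ℝ)..(2 * π), Complex.normSq (rotatedWindow L h ϑ φ₀ θ φ)) * sin ϑ

theorem continuous_rotatedWindow (L : ℕ) (h : ℕ → ℂ) :
    Continuous fun q : (ℝ × ℝ) × (ℝ × ℝ) => rotatedWindow L h q.1.1 q.1.2 q.2.1 q.2.2 := by
  refine continuous_finsetSum _ fun r _ => ?_
  have hfst := (continuous_sphHarmIdx r).comp (continuous_fst (X := ℝ × ℝ) (Y := ℝ × ℝ))
  have hsnd := (continuous_sphHarmIdx r).comp (continuous_snd (X := ℝ × ℝ) (Y := ℝ × ℝ))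
  exact ((continuous_const.mul (Complex.continuous_conj.comp hfst)).mul continuous_const).mul hsnd

theorem rotatedWindow_mem_bandLimited (L : ℕ) (h : ℕ → ℂ) (ϑ φ₀ : ℝ) :
    rotatedWindow L h ϑ φ₀ ∈ bandLimited L :=
  mem_bandLimited_iff.mpr ⟨fun r => ((Real.sqrt (4 * π / (2 * deg r + 1)) : ℝ) : ℂ) *
    conj (sphHarmIdx r ϑ φ₀) * h (deg r), rfl⟩

theorem windowEnergy_eq_integral (L : ℕ) (h : ℕ → ℂ) (θ φ : ℝ) :
    windowEnergy L h θ φ =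
      ∫ y, Complex.normSq (rotatedWindow L h y.1 y.2 θ φ) ∂sphereMeasure := by
  have hcont : Continuous fun y : ℝ × ℝ => rotatedWindow L h y.1 y.2 θ φ :=
    (continuous_rotatedWindow L h).along_fst (y := (θ, φ))
  exact (integral_sphereMeasure_real (Complex.continuous_normSq.comp hcont)).symm

theorem windowEnergy_eq_sum_normSq (L : ℕ) (h : ℕ → ℂ) (θ φ : ℝ) :
    windowEnergy L h θ φ = ∑ p ∈ Finset.range (L + 1), Complex.normSq (h p) := by
  have hconj (y : ℝ × ℝ) : Complex.normSq (rotatedWindow L h y.1 y.2 θ φ) =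
      Complex.normSq (∑ r ∈ Finset.range (L ^ 2 + 2 * L + 1),
        conj (((Real.sqrt (4 * π / (2 * deg r + 1)) : ℝ) : ℂ) * h (deg r) * sphHarmIdx r θ φ) *
          sphHarmIdx r y.1 y.2) := by
    rw [← Complex.normSq_conj, rotatedWindow, map_sum]
    refine congrArg _ (Finset.sum_congr rfl fun r _ => ?_)
    simp only [map_mul, Complex.conj_conj]
    ring
  calc windowEnergy L h θ φ
      = ∑ r ∈ Finset.range (L ^ 2 + 2 * L + 1), 4 * π / (2 * deg r + 1) *
          Complex.normSq (h (deg r)) * Complex.normSq (sphHarm (deg r) (ord r) θ φ) := by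
        simp only [windowEnergy_eq_integral, hconj, integral_normSq_sum_sphHarmIdx]
        refine Finset.sum_congr rfl fun r _ => ?_
        rw [Complex.normSq_conj, Complex.normSq_mul, Complex.normSq_mul, Complex.normSq_ofReal,
          Real.mul_self_sqrt (by positivity), sphHarmIdx]
    _ = ∑ p ∈ Finset.range (L + 1), ∑ m ∈ Finset.Icc (-p : ℤ) p,
          4 * π / (2 * p + 1) * Complex.normSq (h p) * Complex.normSq (sphHarm p m θ φ) :=
        sum_range_deg_ord L fun p m =>
          4 * π / (2 * p + 1) * Complex.normSq (h p) * Complex.normSq (sphHarm p m θ φ)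
    _ = ∑ p ∈ Finset.range (L + 1), Complex.normSq (h p) := by
        refine Finset.sum_congr rfl fun p _ => ?_
        rw [← Finset.mul_sum, sum_normSq_sphHarm]
        field_simp

theorem slsht_energy_conservation_general {Lf : ℕ} {f : ℝ → ℝ → ℂ} (hf : f ∈ bandLimited Lf)
    (Lh : ℕ) (h : ℕ → ℂ) :
    (∀ θ φ, windowEnergy Lh h θ φ = ∑ p ∈ Finset.range (Lh + 1), Complex.normSq (h p)) ∧
    ∑ n ∈ Finset.range ((Lf + Lh) ^ 2 + 2 * (Lf + Lh) + 1),
        ∫ ϑ in (0 : ℝ)..π,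
          (∫ φ₀ in (0 : ℝ)..(2 * π), Complex.normSq (slsht Lh h f ϑ φ₀ n)) * sin ϑ =
      ∫ θ in (0 : ℝ)..π,
        (∫ φ in (0 : ℝ)..(2 * π), Complex.normSq (f θ φ) * windowEnergy Lh h θ φ) * sin θ := by
  refine ⟨windowEnergy_eq_sum_normSq Lh h, ?_⟩
  have hfcont := continuous_of_mem_bandLimited hf
  have hslsht (n : ℕ) : Continuous fun y : ℝ × ℝ => slsht Lh h f y.1 y.2 n :=
    continuous_shc ((continuous_rotatedWindow Lh h).mul (hfcont.comp continuous_snd)) _ _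
  have henergy : Continuous fun x : ℝ × ℝ =>
      Complex.normSq (f x.1 x.2) * windowEnergy Lh h x.1 x.2 := by
    simp only [windowEnergy_eq_sum_normSq]
    exact (Complex.continuous_normSq.comp hfcont).mul continuous_const
  have hkernel := sum_integral_normSq_shc_mul (continuous_rotatedWindow Lh h)
    (fun y => rotatedWindow_mem_bandLimited Lh h y.1 y.2) hf
  simp only [← windowEnergy_eq_integral] at hkernel
  rw [integral_sphereMeasure_real henergy, add_comm Lh] at hkernel
  refine Eq.trans (Finset.sum_congr rfl fun n _ => ?_) hkernel
  exact (integral_sphereMeasure_real (Complex.continuous_normSq.comp (hslsht n))).symm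

end EnergyConservation

/-- Weighted energy conservation of the SLSHT distribution for a unit-energy zonal
window `h` (zonal coefficients `h⁰_p`, degree ≤ `Lh`, `∑_p |h⁰_p|² = 1`) and
band-limited signal `f` (degree ≤ `Lf`):
`∑_n ∫ |g_f(ŷ; n)|² ds(ŷ) = ∫ |f(x̂)|² E_h(x̂) ds(x̂)` with
`E_h(x̂) = ∫ |(D(ŷ)h)(x̂)|² ds(ŷ)`; moreover, since `h` is zonal, `E_h` is a
constant, independent of `x̂`. -/
theorem slsht_energy_conservation (Lf Lh : ℕ) (fc h0 : ℕ → ℂ)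
    (hunit : ∑ p ∈ Finset.range (Lh + 1), Complex.normSq (h0 p) = 1) :
    let Nf := Lf ^ 2 + 2 * Lf
    let Nh := Lh ^ 2 + 2 * Lh
    let Ng := (Lf + Lh) ^ 2 + 2 * (Lf + Lh)
    let f : ℝ → ℝ → ℂ := fun θ φ => ∑ c ∈ Finset.range (Nf + 1), fc c * sphHarmIdx c θ φ
    let Dh : ℝ → ℝ → ℝ → ℝ → ℂ := fun ϑ φ₀ θ φ =>
      ∑ r ∈ Finset.range (Nh + 1),
        ((Real.sqrt (4 * π / (2 * deg r + 1)) : ℝ) : ℂ) * conj (sphHarmIdx r ϑ φ₀) *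
          h0 (deg r) * sphHarmIdx r θ φ
    let g : ℝ → ℝ → ℕ → ℂ := fun ϑ φ₀ n =>
      shc (fun θ φ => Dh ϑ φ₀ θ φ * f θ φ) (deg n) (ord n)
    let Eh : ℝ → ℝ → ℝ := fun θ φ =>
      ∫ ϑ in (0 : ℝ)..π,
        (∫ φ₀ in (0 : ℝ)..(2 * π), Complex.normSq (Dh ϑ φ₀ θ φ)) * Real.sin ϑ
    (∃ cE : ℝ, ∀ θ φ : ℝ, Eh θ φ = cE) ∧
    (∑ n ∈ Finset.range (Ng + 1),
        ∫ ϑ in (0 : ℝ)..π,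
          (∫ φ₀ in (0 : ℝ)..(2 * π), Complex.normSq (g ϑ φ₀ n)) * Real.sin ϑ
      = ∫ θ in (0 : ℝ)..π,
          (∫ φ in (0 : ℝ)..(2 * π), Complex.normSq (f θ φ) * Eh θ φ) * Real.sin θ) := by
  have h := slsht_energy_conservation_general (Lf := Lf) (mem_bandLimited_iff.mpr ⟨fc, rfl⟩) Lh h0
  exact ⟨⟨_, h.1⟩, h.2⟩

end
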